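/- If a Λ-structure (with all operators unary) is one-step compact, then it has quasi-ultraproducts: for every ultrafilter 𝔘 on a set I and every family (X_i, ξ_i)_{i∈I} of T-coalgebras on nonempty sets X_i, there exists a T-coalgebra structure ξ on the ultraproduct ∏_𝔘 X_i making it a quasi-ultraproduct of the family. -/

import Mathlib

namespace CPL

/-- A Λ-structure: a `Set`-endofunctor `T` together with a natural predicate lifting
for every modal operator. -/
structure LambdaStructure (Λ : Type) (ar : Λ → ℕ) : Type 1 where
  T : Type → Type
  map : {C D : Type} → (C → D) → T C → T D
  lift : (ℓ : Λ) → (C : Type) → (Fin (ar ℓ) → Set C) → Set (T C)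
  natural : ∀ {C D : Type} (f : C → D) (ℓ : Λ) (A : Fin (ar ℓ) → Set D) (t : T C),
      map f t ∈ lift ℓ D A ↔ t ∈ lift ℓ C fun i => f ⁻¹' A i

/-- Formulas of coalgebraic predicate logic `CPL(Λ,Σ)`. -/
inductive Formula (Λ : Type) (ar : Λ → ℕ) (Sig : Type) (arP : Sig → ℕ) (V : Type) : Type
  | eq : V → V → Formula Λ ar Sig arP V
  | pred : (P : Sig) → (Fin (arP P) → V) → Formula Λ ar Sig arP V
  | bot : Formula Λ ar Sig arP V
  | imp : Formula Λ ar Sig arP V → Formula Λ ar Sig arP V → Formula Λ ar Sig arP V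
  | all : V → Formula Λ ar Sig arP V → Formula Λ ar Sig arP V
  | heart : V → (ℓ : Λ) → (Fin (ar ℓ) → V) → (Fin (ar ℓ) → Formula Λ ar Sig arP V) →
      Formula Λ ar Sig arP V

variable {Λ : Type} {ar : Λ → ℕ} {Sig : Type} {arP : Sig → ℕ} {V : Type}

def Formula.notF (φ : Formula Λ ar Sig arP V) : Formula Λ ar Sig arP V := φ.imp .bot

def Formula.orF (φ ψ : Formula Λ ar Sig arP V) : Formula Λ ar Sig arP V := (φ.imp .bot).imp ψ

def Formula.andF (φ ψ : Formula Λ ar Sig arP V) : Formula Λ ar Sig arP V := (φ.imp ψ.notF).notF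

def Formula.iffF (φ ψ : Formula Λ ar Sig arP V) : Formula Λ ar Sig arP V :=
  (φ.imp ψ).andF (ψ.imp φ)

def Formula.exF (x : V) (φ : Formula Λ ar Sig arP V) : Formula Λ ar Sig arP V :=
  (Formula.all x φ.notF).notF

def bigOr (l : List (Formula Λ ar Sig arP V)) : Formula Λ ar Sig arP V :=
  l.foldr Formula.orF .bot

def bigAnd (l : List (Formula Λ ar Sig arP V)) : Formula Λ ar Sig arP V :=
  l.foldr Formula.andF (Formula.bot.notF)

def allList (ys : List V) (φ : Formula Λ ar Sig arP V) : Formula Λ ar Sig arP V :=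
  ys.foldr Formula.all φ

def exList (ys : List V) (φ : Formula Λ ar Sig arP V) : Formula Λ ar Sig arP V :=
  ys.foldr Formula.exF φ

/-- Free variables of a CPL formula. -/
def Formula.freeVars : Formula Λ ar Sig arP V → Set V
  | .eq a b => {a, b}
  | .pred _ xs => Set.range xs
  | .bot => ∅
  | .imp φ ψ => φ.freeVars ∪ ψ.freeVars
  | .all x φ => φ.freeVars \ {x}
  | .heart x _ ys φs => insert x (⋃ i, ((φs i).freeVars \ {ys i}))

variable [DecidableEq V]

/-- Substitution `φ[t/x]` of the variable `t` for the variable `x` (terms are variables). -/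
def Formula.subst : Formula Λ ar Sig arP V → V → V → Formula Λ ar Sig arP V
  | .eq a b, t, x => .eq (if a = x then t else a) (if b = x then t else b)
  | .pred P xs, t, x => .pred P fun i => if xs i = x then t else xs i
  | .bot, _, _ => .bot
  | .imp φ ψ, t, x => .imp (φ.subst t x) (ψ.subst t x)
  | .all y φ, t, x => if y = x then .all y φ else .all y (φ.subst t x)
  | .heart z ℓ ys φs, t, x =>
      .heart (if z = x then t else z) ℓ ys fun i => if ys i = x then φs i else (φs i).subst t x

/-- Substitutability of the variable `t` for the variable `x` (Enderton-style). -/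
def Formula.Substitutable (t x : V) : Formula Λ ar Sig arP V → Prop
  | .eq _ _ => True
  | .pred _ _ => True
  | .bot => True
  | .imp φ ψ => φ.Substitutable t x ∧ ψ.Substitutable t x
  | .all y φ => t ∉ (Formula.all y φ).freeVars ∨ (t ≠ y ∧ φ.Substitutable t x)
  | .heart _ _ ys φs =>
      ∀ i, t ∉ ((φs i).freeVars \ {ys i}) ∨ (t ≠ ys i ∧ (φs i).Substitutable t x)

/-- Satisfaction in a coalgebraic model (given by a coalgebra `γ` and an
interpretation `I` of the predicate symbols). -/
def Sat (S : LambdaStructure Λ ar) {C : Type} (γ : C → S.T C)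
    (I : (P : Sig) → (Fin (arP P) → C) → Prop) :
    (V → C) → Formula Λ ar Sig arP V → Prop
  | v, .eq a b => v a = v b
  | v, .pred P xs => I P fun i => v (xs i)
  | _, .bot => False
  | v, .imp φ ψ => Sat S γ I v φ → Sat S γ I v ψ
  | v, .all x φ => ∀ c : C, Sat S γ I (Function.update v x c) φ
  | v, .heart x ℓ ys φs =>
      γ (v x) ∈ S.lift ℓ C fun i => {c : C | Sat S γ I (Function.update v (ys i) c) (φs i)}


/-- Boolean (propositional) formulas over a set `α` of atoms. -/
inductive PropForm (α : Type) : Type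
  | var : α → PropForm α
  | bot : PropForm α
  | imp : PropForm α → PropForm α → PropForm α

namespace PropForm

def neg {α : Type} (A : PropForm α) : PropForm α := A.imp .bot

def orP {α : Type} (A B : PropForm α) : PropForm α := (A.imp .bot).imp B

def vars {α : Type} : PropForm α → Set α
  | .var a => {a}
  | .bot => ∅
  | .imp A B => A.vars ∪ B.vars

def bind {α β : Type} (f : α → PropForm β) : PropForm α → PropForm β
  | .var a => f a
  | .bot => .bot
  | .imp A B => .imp (A.bind f) (B.bind f)

end PropForm

/-- Evaluation of Boolean formulas in the Boolean algebra `𝒫 C`. -/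
def pEval {α C : Type} (f : α → Set C) : PropForm α → Set C
  | .var a => f a
  | .bot => ∅
  | .imp A B => (pEval f A)ᶜ ∪ pEval f B

/-- Evaluation of Boolean formulas under a valuation of atoms by propositions. -/
def pHolds {α : Type} (w : α → Prop) : PropForm α → Prop
  | .var a => w a
  | .bot => False
  | .imp A B => pHolds w A → pHolds w B

/-- A modal literal `♥ p₁ … pₙ` over schematic variables. -/
abbrev ModalLit (Λ : Type) (ar : Λ → ℕ) (sVar : Type) : Type := (ℓ : Λ) × (Fin (ar ℓ) → sVar)

/-- A one-step rule `A / P`, with `P` represented as a list of signed modal literals. -/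
structure OneStepRule (Λ : Type) (ar : Λ → ℕ) (sVar : Type) : Type where
  prem : PropForm sVar
  lits : List (Bool × ModalLit Λ ar sVar)

variable {Λ : Type} {ar : Λ → ℕ} {sVar : Type}

/-- Well-formedness of one-step rules: every schematic variable occurs at most once in the
conclusion, and every schematic variable of the premise occurs in the conclusion. -/
def OneStepRule.WF (R : OneStepRule Λ ar sVar) : Prop :=
  ((R.lits.map fun l => List.ofFn l.2.2).flatten).Nodup ∧
    R.prem.vars ⊆ {p | ∃ l ∈ R.lits, ∃ j, l.2.2 j = p}

def litSet (S : LambdaStructure Λ ar) (C : Type) (τ : sVar → Set C)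
    (l : Bool × ModalLit Λ ar sVar) : Set (S.T C) :=
  if l.1 then S.lift l.2.1 C (fun j => τ (l.2.2 j)) else (S.lift l.2.1 C (fun j => τ (l.2.2 j)))ᶜ

/-- One-step soundness of a one-step rule. -/
def OneStepSound (S : LambdaStructure Λ ar) (R : OneStepRule Λ ar sVar) : Prop :=
  ∀ (C : Type) (τ : sVar → Set C), pEval τ R.prem = Set.univ →
    (⋃ l ∈ R.lits, litSet S C τ l) = Set.univ

/-- `♥` is `k`-bounded in its `i`-th argument. -/
def BoundedAt (S : LambdaStructure Λ ar) (ℓ : Λ) (i : Fin (ar ℓ)) (k : ℕ) : Prop :=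
  ∀ (C : Type) (A : Fin (ar ℓ) → Set C) (t : S.T C),
    t ∈ S.lift ℓ C A ↔
      ∃ B : Set C, B ⊆ A i ∧ B.Finite ∧ B.ncard ≤ k ∧ t ∈ S.lift ℓ C (Function.update A i B)



section Ultraproducts

variable {I : Type}

/-- The setoid underlying the ultraproduct `∏_𝔘 X_i`. -/
def upSetoid (𝔘 : Ultrafilter I) (X : I → Type) : Setoid (∀ i, X i) where
  r x y := {i | x i = y i} ∈ 𝔘
  iseqv := by
    refine ⟨fun x => ?_, fun {x y} h => ?_, fun {x y z} hxy hyz => ?_⟩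
    · have : {i | x i = x i} = Set.univ := by ext i; simp
      rw [this]; exact Filter.univ_mem
    · have : {i | x i = y i} = {i | y i = x i} := by ext i; exact eq_comm
      rwa [this] at h
    · exact Filter.mem_of_superset (Filter.inter_mem hxy hyz)
        (fun i hi => hi.1.trans hi.2)

/-- The ultraproduct `∏_𝔘 X_i` of a family of sets. -/
def UProd (𝔘 : Ultrafilter I) (X : I → Type) : Type := Quotient (upSetoid 𝔘 X)

/-- The equivalence class of a family. -/
def upMk (𝔘 : Ultrafilter I) (X : I → Type) (x : ∀ i, X i) : UProd 𝔘 X :=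
  Quotient.mk (upSetoid 𝔘 X) x

/-- The admissible subset `∏_𝔘 A_i = {x | {i | x_i ∈ A_i} ∈ 𝔘}` of the ultraproduct. -/
def admSet (𝔘 : Ultrafilter I) (X : I → Type) (A : ∀ i, Set (X i)) : Set (UProd 𝔘 X) :=
  {c | Quotient.liftOn c (fun x => {i | x i ∈ A i} ∈ 𝔘) (by
    intro x y h
    refine propext ⟨fun hx => ?_, fun hy => ?_⟩
    · refine Filter.mem_of_superset (Filter.inter_mem h hx) (fun i hi => ?_)
      have h1 : x i = y i := hi.1
      have h2 : x i ∈ A i := hi.2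
      simpa [h1] using h2
    · refine Filter.mem_of_superset (Filter.inter_mem h hy) (fun i hi => ?_)
      have h1 : x i = y i := hi.1
      have h2 : y i ∈ A i := hi.2
      simpa [h1] using h2)}

end Ultraproducts

section QuasiUltraproducts

variable {I : Type}

/-- `ξ` is a quasi-ultraproduct of the `T`-coalgebras `(X_i, ξ_i)` w.r.t. `𝔘`
(for a similarity type with unary operators): for every family of subsets `A_i ⊆ X_i`,
every `x ∈ ∏_𝔘 X_i` and every `♥ ∈ Λ`,
`ξ(x) ∈ ⟦♥⟧(∏_𝔘 A_i)` iff `{i | ξ_i(x_i) ∈ ⟦♥⟧(A_i)} ∈ 𝔘`. -/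
def IsQUPCoalg (S : LambdaStructure Λ ar) (𝔘 : Ultrafilter I) (X : I → Type)
    (ξi : ∀ i, X i → S.T (X i)) (ξ : UProd 𝔘 X → S.T (UProd 𝔘 X)) : Prop :=
  ∀ (A : ∀ i, Set (X i)) (x : ∀ i, X i) (ℓ : Λ),
    ξ (upMk 𝔘 X x) ∈ S.lift ℓ (UProd 𝔘 X) (fun _ => admSet 𝔘 X A) ↔
      {i | ξi i (x i) ∈ S.lift ℓ (X i) (fun _ => A i)} ∈ 𝔘

/-- The predicate interpretation `J` on the ultraproduct is the standard ultraproduct of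
the component interpretations `I_i`. -/
def IsQUPPred (𝔘 : Ultrafilter I) (X : I → Type)
    (Ii : ∀ i, (P : Sig) → (Fin (arP P) → X i) → Prop)
    (J : (P : Sig) → (Fin (arP P) → UProd 𝔘 X) → Prop) : Prop :=
  ∀ (P : Sig) (a : Fin (arP P) → ∀ i, X i),
    J P (fun j => upMk 𝔘 X (a j)) ↔ {i | Ii i P (fun j => a j i)} ∈ 𝔘

end QuasiUltraproducts

section OneStepCompactness

/-- Satisfaction of a one-step formula (a Boolean combination of expressions `♥A`, `A ⊆ X`)
by an element `t ∈ TX` (unary operators). -/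
def osSat (S : LambdaStructure Λ ar) (X : Type) (t : S.T X) (A : PropForm (Λ × Set X)) :
    Prop :=
  t ∈ pEval (fun l => S.lift l.1 X fun _ => l.2) A

/-- A `Λ`-structure is one-step compact: every finitely satisfiable set of one-step
formulas over any set `X` is satisfiable. -/
def OneStepCompact (S : LambdaStructure Λ ar) : Prop :=
  ∀ (X : Type) (Φ : Set (PropForm (Λ × Set X))),
    (∀ Φ₀ ⊆ Φ, Φ₀.Finite → ∃ t : S.T X, ∀ A ∈ Φ₀, osSat S X t A) →
    ∃ t : S.T X, ∀ A ∈ Φ, osSat S X t A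

/-- Satisfaction of a finitary one-step formula (atoms `♥B` with `B ⊆ X` finite). -/
def osSatFin (S : LambdaStructure Λ ar) (X : Type) (t : S.T X)
    (A : PropForm (Λ × Finset X)) : Prop :=
  t ∈ pEval (fun l => S.lift l.1 X fun _ => (l.2 : Set X)) A

/-- A `Λ`-structure is finitary one-step compact: every finitely satisfiable set of
one-step formulas over finite subsets of any set `X` is satisfiable. -/
def FinitaryOneStepCompact (S : LambdaStructure Λ ar) : Prop :=
  ∀ (X : Type) (Φ : Set (PropForm (Λ × Finset X))),
    (∀ Φ₀ ⊆ Φ, Φ₀.Finite → ∃ t : S.T X, ∀ A ∈ Φ₀, osSatFin S X t A) →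
    ∃ t : S.T X, ∀ A ∈ Φ, osSatFin S X t A

end OneStepCompactness

/-!
Fix `x`, put `t i = ξ i (x i)`, and take finitely many families `A k` of subsets of the `X i`. For
almost all `i`, every membership pattern `{k | y ∈ A k i}` of a point `y ∈ X i` is also the pattern
of some point of the ultraproduct with respect to the sets `∏ A k`, because a pattern realized in
almost every factor is realized in the ultraproduct and there are only finitely many patterns.
Choosing such points gives `f : X i → ∏ X` with `f ⁻¹' (∏ A k) = A k i`, and by naturality
`T f (t i)` has the same one-step behaviour on the sets `∏ A k` as `t i` has on the sets `A k i`,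
which for almost all `i` is the behaviour prescribed by the ultrafilter. So all finite parts of that
prescription are satisfiable, and one-step compactness satisfies all of it at once.
-/

open Filter

theorem eventually_iff_eventually {I : Type*} (𝔘 : Ultrafilter I) (p : I → Prop) :
    ∀ᶠ i in 𝔘, (p i ↔ ∀ᶠ j in 𝔘, p j) := by
  by_cases h : ∀ᶠ j in 𝔘, p j
  · exact h.mono fun _ hi => iff_of_true hi h
  · exact (Ultrafilter.eventually_not.2 h).mono fun _ hi => iff_of_false hi h

section UltraproductLemmas

variable {I : Type} {𝔘 : Ultrafilter I} {X : I → Type}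

theorem upMk_surjective : Function.Surjective (upMk 𝔘 X) :=
  Quotient.mk_surjective

theorem upMk_eq_iff {x y : ∀ i, X i} : upMk 𝔘 X x = upMk 𝔘 X y ↔ ∀ᶠ i in 𝔘, x i = y i :=
  Quotient.eq

theorem upMk_mem_admSet {A : ∀ i, Set (X i)} {x : ∀ i, X i} :
    upMk 𝔘 X x ∈ admSet 𝔘 X A ↔ ∀ᶠ i in 𝔘, x i ∈ A i :=
  Iff.rfl

variable [∀ i, Nonempty (X i)] {κ : Type*} (A : κ → ∀ i, Set (X i))

theorem exists_mem_admSet_iff_of_eventually {σ : Set κ}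
    (h : ∀ᶠ i in 𝔘, ∃ y : X i, ∀ k, y ∈ A k i ↔ k ∈ σ) :
    ∃ c : UProd 𝔘 X, ∀ k, c ∈ admSet 𝔘 X (A k) ↔ k ∈ σ := by
  obtain ⟨y, hy⟩ := skolem.1 h
  refine ⟨upMk 𝔘 X y, fun k => ?_⟩
  rw [upMk_mem_admSet, eventually_congr (hy.mono fun i hi => hi k), eventually_const]

theorem eventually_exists_preimage_admSet_eq [Finite κ] :
    ∀ᶠ i in 𝔘, ∃ f : X i → UProd 𝔘 X, ∀ k, f ⁻¹' admSet 𝔘 X (A k) = A k i := by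
  have patterns : ∀ᶠ i in 𝔘, ∀ σ : Set κ, (∃ y : X i, ∀ k, y ∈ A k i ↔ k ∈ σ) →
      ∃ c : UProd 𝔘 X, ∀ k, c ∈ admSet 𝔘 X (A k) ↔ k ∈ σ :=
    eventually_all.2 fun σ => Ultrafilter.eventually_imp.2 fun h =>
      Eventually.of_forall fun _ => exists_mem_admSet_iff_of_eventually A h
  filter_upwards [patterns] with i hi
  choose f hf using fun y : X i => hi {k | y ∈ A k i} ⟨y, fun _ => Iff.rfl⟩
  exact ⟨f, fun k => Set.ext fun y => hf y k⟩

end UltraproductLemmas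

open Classical in
/-- The literal `A` or `¬A` asserting that the formula `A` has truth value `p`. -/
noncomputable def PropForm.signed {α : Type} (A : PropForm α) (p : Prop) : PropForm α :=
  if p then A else A.neg

section OneStep

variable {S : LambdaStructure Λ ar}

theorem osSat_neg {X : Type} {t : S.T X} {A : PropForm (Λ × Set X)} :
    osSat S X t A.neg ↔ ¬osSat S X t A := by
  simp only [osSat, PropForm.neg, pEval, Set.union_empty, Set.mem_compl_iff]

theorem osSat_signed {X : Type} {t : S.T X} {A : PropForm (Λ × Set X)} {p : Prop} :
    osSat S X t (A.signed p) ↔ (osSat S X t A ↔ p) := by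
  by_cases hp : p <;> simp only [PropForm.signed, hp, if_true, if_false, osSat_neg, iff_true,
    iff_false]

theorem OneStepCompact.exists_forall_mem_lift_iff (hS : OneStepCompact S) {X : Type} {κ : Type*}
    (ℓ : κ → Λ) (A : κ → Set X) (v : κ → Prop)
    (hfin : ∀ F : Finset κ, ∃ t : S.T X, ∀ k ∈ F, (t ∈ S.lift (ℓ k) X fun _ => A k) ↔ v k) :
    ∃ t : S.T X, ∀ k, (t ∈ S.lift (ℓ k) X fun _ => A k) ↔ v k := by
  classical
  let φ (k : κ) : PropForm (Λ × Set X) := (PropForm.var (ℓ k, A k)).signed (v k)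
  have osSat_φ (t : S.T X) (k : κ) : osSat S X t (φ k) ↔
      ((t ∈ S.lift (ℓ k) X fun _ => A k) ↔ v k) := osSat_signed
  obtain ⟨t, ht⟩ := hS X (Set.range φ) fun Φ₀ hsub hΦ₀ => by
    lift Φ₀ to Finset (PropForm (Λ × Set X)) using hΦ₀
    rw [← Set.image_univ, Finset.subset_set_image_iff] at hsub
    obtain ⟨F, -, rfl⟩ := hsub
    obtain ⟨t, ht⟩ := hfin F
    refine ⟨t, fun B hB => ?_⟩
    obtain ⟨k, hk, rfl⟩ := Finset.mem_image.1 hB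
    exact (osSat_φ t k).2 (ht k hk)
  exact ⟨t, fun k => (osSat_φ t k).1 (ht _ ⟨k, rfl⟩)⟩

variable {I : Type} (𝔘 : Ultrafilter I) {X : I → Type} [∀ i, Nonempty (X i)] (t : ∀ i, S.T (X i))

theorem exists_forall_mem_lift_admSet_iff_of_finite {κ : Type*} [Finite κ] (ℓ : κ → Λ)
    (A : ∀ k, Fin (ar (ℓ k)) → ∀ i, Set (X i)) :
    ∃ s : S.T (UProd 𝔘 X), ∀ k, (s ∈ S.lift (ℓ k) (UProd 𝔘 X) fun j => admSet 𝔘 X (A k j)) ↔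
      ∀ᶠ i in 𝔘, t i ∈ S.lift (ℓ k) (X i) fun j => A k j i := by
  have maps := eventually_exists_preimage_admSet_eq (𝔘 := 𝔘)
    fun a : (k : κ) × Fin (ar (ℓ k)) => A a.1 a.2
  have truth := eventually_all.2 fun k =>
    eventually_iff_eventually 𝔘 fun i => t i ∈ S.lift (ℓ k) (X i) fun j => A k j i
  obtain ⟨i, ⟨f, hf⟩, htruth⟩ := (maps.and truth).exists
  refine ⟨S.map f (t i), fun k => ?_⟩
  rw [S.natural, ← htruth k, funext fun j => hf ⟨k, j⟩]

theorem OneStepCompact.exists_forall_mem_lift_admSet_iff (hS : OneStepCompact S) :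
    ∃ s : S.T (UProd 𝔘 X), ∀ (ℓ : Λ) (A : ∀ i, Set (X i)),
      (s ∈ S.lift ℓ (UProd 𝔘 X) fun _ => admSet 𝔘 X A) ↔
        ∀ᶠ i in 𝔘, t i ∈ S.lift ℓ (X i) fun _ => A i := by
  obtain ⟨s, hs⟩ := hS.exists_forall_mem_lift_iff (κ := Λ × ∀ i, Set (X i)) Prod.fst
    (fun k => admSet 𝔘 X k.2) (fun k => ∀ᶠ i in 𝔘, t i ∈ S.lift k.1 (X i) fun _ => k.2 i)
    fun F => by
      obtain ⟨s, hs⟩ := exists_forall_mem_lift_admSet_iff_of_finite 𝔘 t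
        (fun k : F => k.1.1) fun k _ => k.1.2
      exact ⟨s, fun k hk => hs ⟨k, hk⟩⟩
  exact ⟨s, fun ℓ A => hs (ℓ, A)⟩

end OneStep

theorem qup_exists_of_onestep_compact_general (S : LambdaStructure Λ ar)
    (hcompact : OneStepCompact S) {I : Type} (𝔘 : Ultrafilter I) (X : I → Type)
    (ξi : ∀ i, X i → S.T (X i)) :
    ∃ ξ : UProd 𝔘 X → S.T (UProd 𝔘 X), IsQUPCoalg S 𝔘 X ξi ξ := by
  have exists_value (x : ∀ i, X i) :=
    haveI (i : I) : Nonempty (X i) := ⟨x i⟩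
    hcompact.exists_forall_mem_lift_admSet_iff 𝔘 fun i => ξi i (x i)
  choose g hg using exists_value
  let rep : UProd 𝔘 X → ∀ i, X i := Function.surjInv upMk_surjective
  refine ⟨fun c => g (rep c), fun A x ℓ => (hg _ ℓ A).trans (eventually_congr ?_)⟩
  have rep_eq : ∀ᶠ i in 𝔘, rep (upMk 𝔘 X x) i = x i :=
    upMk_eq_iff.1 (Function.surjInv_eq upMk_surjective _)
  filter_upwards [rep_eq] with i hi
  rw [hi]

/-- **Existence of quasi-ultraproducts under one-step compactness** (Thm. 5.6): if a
`Λ`-structure (with all operators unary) is one-step compact, then for every ultrafilter `𝔘`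
on a set `I` and every family of `T`-coalgebras on nonempty sets there is a coalgebra
structure on the ultraproduct making it a quasi-ultraproduct. -/
theorem qup_exists_of_onestep_compact (S : LambdaStructure Λ ar)
    (hunary : ∀ ℓ : Λ, ar ℓ = 1)
    (hcompact : OneStepCompact S)
    {I : Type} (𝔘 : Ultrafilter I) (X : I → Type) (hne : ∀ i, Nonempty (X i))
    (ξi : ∀ i, X i → S.T (X i)) :
    ∃ ξ : UProd 𝔘 X → S.T (UProd 𝔘 X), IsQUPCoalg S 𝔘 X ξi ξ :=
  qup_exists_of_onestep_compact_general S hcompact 𝔘 X ξi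

end CPL
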